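/- arXiv:1809.03674 — 6 statements merged into one kernel-verified Lean document; each statement's English description precedes it below -/
import Mathlib

section
/- Define cross(u,v) = u₁v₂ − u₂v₁ for u, v ∈ ℝ². Let u, a, b ∈ ℝ² with a ≠ 0, b ≠ 0, cross(u,a) ≥ 0 and cross(u,b) ≥ 0. Then for every s ∈ [0,1] with c = s·a + (1−s)·b ≠ 0, one has cross(u,c)/‖c‖ ≥ min( cross(u,a)/‖a‖, cross(u,b)/‖b‖ ), where ‖·‖ is the Euclidean norm. -/
noncomputable section

open scoped RealInnerProductSpace

/-- The plane `ℝ²` with the Euclidean norm and inner product. -/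
abbrev E2 : Type := EuclideanSpace ℝ (Fin 2)

/-- Action of a 2×2 matrix on a vector of `ℝ²`. -/
def matVec (M : Matrix (Fin 2) (Fin 2) ℝ) (v : E2) : E2 :=
  (WithLp.equiv 2 (Fin 2 → ℝ)).symm (M.mulVec (WithLp.equiv 2 (Fin 2 → ℝ) v))

/-- The Hessian matrix of `f : ℝ² → ℝ` at `x`. -/
def hessM (f : E2 → ℝ) (x : E2) : Matrix (Fin 2) (Fin 2) ℝ :=
  Matrix.of fun i j =>
    fderiv ℝ (fun y => fderiv ℝ f y (EuclideanSpace.single j 1)) x (EuclideanSpace.single i 1)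

/-- The planar cross product `cross(u,v) = u₁v₂ − u₂v₁ = ‖u‖‖v‖ sin θ`. -/
def cross (u v : E2) : ℝ := u 0 * v 1 - u 1 * v 0

/-- sine of angle to a convex combination.
If `a, b ≠ 0` lie on the nonnegative side of `u` (i.e. `cross(u,a) ≥ 0`, `cross(u,b) ≥ 0`),
then for any convex combination `c = s a + (1−s) b ≠ 0`,
`cross(u,c)/‖c‖ ≥ min(cross(u,a)/‖a‖, cross(u,b)/‖b‖)`. -/
theorem stmt3 (u a b : E2) (ha : a ≠ 0) (hb : b ≠ 0)
    (hca : 0 ≤ cross u a) (hcb : 0 ≤ cross u b) :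
    ∀ s ∈ Set.Icc (0 : ℝ) 1, ∀ c : E2, c = s • a + (1 - s) • b → c ≠ 0 →
      min (cross u a / ‖a‖) (cross u b / ‖b‖) ≤ cross u c / ‖c‖ := by
  rintro s ⟨hs0, hs1⟩ c hc hc0
  have hna : 0 < ‖a‖ := norm_pos_iff.mpr ha
  have hnb : 0 < ‖b‖ := norm_pos_iff.mpr hb
  have hnc : 0 < ‖c‖ := norm_pos_iff.mpr hc0
  have h1s : 0 ≤ 1 - s := by linarith
  have hma := min_le_left (cross u a / ‖a‖) (cross u b / ‖b‖)
  have hmb := min_le_right (cross u a / ‖a‖) (cross u b / ‖b‖)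
  have hm0 : 0 ≤ min (cross u a / ‖a‖) (cross u b / ‖b‖) :=
    le_min (div_nonneg hca hna.le) (div_nonneg hcb hnb.le)
  generalize min (cross u a / ‖a‖) (cross u b / ‖b‖) = m at *
  rw [le_div_iff₀ hna] at hma
  rw [le_div_iff₀ hnb] at hmb
  rw [le_div_iff₀ hnc]
  have hcc : cross u c = s * cross u a + (1 - s) * cross u b := by
    subst hc
    simp only [cross, PiLp.add_apply, PiLp.smul_apply, smul_eq_mul]
    ring
  have hn : ‖c‖ ≤ s * ‖a‖ + (1 - s) * ‖b‖ := by
    rw [hc]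
    refine (norm_add_le _ _).trans ?_
    rw [norm_smul, norm_smul, Real.norm_of_nonneg hs0, Real.norm_of_nonneg h1s]
  calc m * ‖c‖ ≤ m * (s * ‖a‖ + (1 - s) * ‖b‖) := mul_le_mul_of_nonneg_left hn hm0
    _ = s * (m * ‖a‖) + (1 - s) * (m * ‖b‖) := by ring
    _ ≤ s * cross u a + (1 - s) * cross u b :=
      add_le_add (mul_le_mul_of_nonneg_left hma hs0) (mul_le_mul_of_nonneg_left hmb h1s)
    _ = cross u c := hcc.symm
end
end

section
/- Let k₁, k₂ > 0 and let r₁*, r₂* ∈ ℝ² be nonzero. Let r₁(t) = r₁* + (r₁(0) − r₁*) e^{−k₁ t} and r₂(t) = r₂* + (r₂(0) − r₂*) e^{−k₂ t}, where the initial values satisfy: (i) r₁(0) = μ r₁* for some μ > 0, and (ii) cross(r₁*, r₂(0)) and cross(r₁*, r₂*) are both nonzero with the same sign. Define ρ* = cross(r₁*, r₂*)/(‖r₁*‖‖r₂*‖) and ρ₀ = cross(r₁(0), r₂(0))/(‖r₁(0)‖‖r₂(0)‖). Then for all t ≥ 0: r₁(t) ≠ 0, r₂(t) ≠ 0, the quantity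 sin θ₁₂(t) = cross(r₁(t), r₂(t))/(‖r₁(t)‖‖r₂(t)‖) has the same sign as ρ* and ρ₀, and |sin θ₁₂(t)| ≥ min(|ρ*|, |ρ₀|). -/
noncomputable section

open scoped RealInnerProductSpace

theorem sinS_smul (c : ℝ) (hc : 0 < c) (u v : E2) :
    cross (c • u) v / (‖c • u‖ * ‖v‖) = cross u v / (‖u‖ * ‖v‖) := by
  have h : cross (c • u) v = c * cross u v := by
    simp [cross]; ring
  rw [h, norm_smul, Real.norm_of_nonneg hc.le, mul_assoc, mul_div_mul_left _ _ hc.ne']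

theorem cross_comb (a b : ℝ) (u v w : E2) :
    cross u (a • v + b • w) = a * cross u v + b * cross u w := by
  simp [cross]; ring

theorem ne_zero_of_cross (u v : E2) (h : cross u v ≠ 0) : v ≠ 0 := by
  rintro rfl
  simp [cross] at h

/-- formation-angle lemma.
Under the formation controller, `rᵢ(t) = rᵢ* + (rᵢ(0) − rᵢ*)e^{−kᵢt}`.  If `r₁(0)` is a
positive multiple of `r₁*` and `cross(r₁*, r₂(0))`, `cross(r₁*, r₂*)` are nonzero of the
same sign, then for all `t ≥ 0` the vectors `r₁(t), r₂(t)` are nonzero,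
`sin θ₁₂(t) = cross(r₁(t),r₂(t))/(‖r₁(t)‖‖r₂(t)‖)` has the same sign as
`ρ* = cross(r₁*,r₂*)/(‖r₁*‖‖r₂*‖)` and `ρ₀ = cross(r₁(0),r₂(0))/(‖r₁(0)‖‖r₂(0)‖)`, and
`|sin θ₁₂(t)| ≥ min(|ρ*|, |ρ₀|)`. -/
theorem stmt4 (k₁ k₂ : ℝ) (hk₁ : 0 < k₁) (hk₂ : 0 < k₂)
    (r₁s r₂s r₁0 r₂0 : E2) (hr₁s : r₁s ≠ 0) (hr₂s : r₂s ≠ 0)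
    (μ : ℝ) (hμ : 0 < μ) (hdir : r₁0 = μ • r₁s)
    (hsign : 0 < cross r₁s r₂0 * cross r₁s r₂s)
    (r₁ r₂ : ℝ → E2)
    (hr₁ : ∀ t : ℝ, r₁ t = r₁s + Real.exp (-(k₁ * t)) • (r₁0 - r₁s))
    (hr₂ : ∀ t : ℝ, r₂ t = r₂s + Real.exp (-(k₂ * t)) • (r₂0 - r₂s))
    (ρs ρ0 : ℝ)
    (hρs : ρs = cross r₁s r₂s / (‖r₁s‖ * ‖r₂s‖))
    (hρ0 : ρ0 = cross r₁0 r₂0 / (‖r₁0‖ * ‖r₂0‖)) :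
    ∀ t ≥ (0 : ℝ),
      r₁ t ≠ 0 ∧ r₂ t ≠ 0 ∧
      0 < (cross (r₁ t) (r₂ t) / (‖r₁ t‖ * ‖r₂ t‖)) * ρs ∧
      0 < (cross (r₁ t) (r₂ t) / (‖r₁ t‖ * ‖r₂ t‖)) * ρ0 ∧
      min |ρs| |ρ0| ≤ |cross (r₁ t) (r₂ t) / (‖r₁ t‖ * ‖r₂ t‖)| := by
  intro t ht
  have he1 : 0 < Real.exp (-(k₁ * t)) := Real.exp_pos _
  have he1' : Real.exp (-(k₁ * t)) ≤ 1 := Real.exp_le_one_iff.2 (by nlinarith)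
  have he2 : 0 < Real.exp (-(k₂ * t)) := Real.exp_pos _
  have he2' : Real.exp (-(k₂ * t)) ≤ 1 := Real.exp_le_one_iff.2 (by nlinarith)
  have h1 := hr₁ t
  have h2 := hr₂ t
  generalize Real.exp (-(k₁ * t)) = e at *
  generalize Real.exp (-(k₂ * t)) = f at *
  have hc : 0 < (1 - e) + e * μ := by
    have := mul_pos he1 hμ
    linarith
  have h1' : r₁ t = ((1 - e) + e * μ) • r₁s := by
    rw [h1, hdir]; module
  have h2' : r₂ t = (1 - f) • r₂s + f • r₂0 := by
    rw [h2]; module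
  have hC := cross_comb (1 - f) f r₁s r₂s r₂0
  rw [← h2'] at hC
  have hA0 : cross r₁s r₂s ≠ 0 := right_ne_zero_of_mul hsign.ne'
  have hB0 : cross r₁s r₂0 ≠ 0 := left_ne_zero_of_mul hsign.ne'
  have hCA : 0 < cross r₁s (r₂ t) * cross r₁s r₂s := by
    rw [hC]
    have := mul_pos he2 hsign
    have := mul_nonneg (sub_nonneg.2 he2') (mul_self_nonneg (cross r₁s r₂s))
    nlinarith
  have hCB : 0 < cross r₁s (r₂ t) * cross r₁s r₂0 := by
    rw [hC]
    have := mul_nonneg (sub_nonneg.2 he2') hsign.le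
    have := mul_pos he2 (mul_self_pos.2 hB0)
    nlinarith
  have hr2 : r₂ t ≠ 0 := ne_zero_of_cross _ _ (left_ne_zero_of_mul hCA.ne')
  have hr20 : r₂0 ≠ 0 := ne_zero_of_cross _ _ hB0
  have n1 := norm_pos_iff.2 hr₁s
  have n2 := norm_pos_iff.2 hr₂s
  have n3 := norm_pos_iff.2 hr20
  have n4 := norm_pos_iff.2 hr2
  rw [hdir, sinS_smul _ hμ] at hρ0
  rw [h1', sinS_smul _ hc]
  refine ⟨smul_ne_zero hc.ne' hr₁s, hr2, ?_, ?_, ?_⟩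
  · rw [hρs, div_mul_div_comm]
    positivity
  · rw [hρ0, div_mul_div_comm]
    positivity
  · have hms : min |ρs| |ρ0| ≤ |ρs| := min_le_left _ _
    have hm0 : min |ρs| |ρ0| ≤ |ρ0| := min_le_right _ _
    have hm : 0 ≤ min |ρs| |ρ0| := le_min (abs_nonneg _) (abs_nonneg _)
    generalize min |ρs| |ρ0| = m at *
    rw [hρs, abs_div, abs_of_pos (mul_pos n1 n2), le_div_iff₀ (mul_pos n1 n2)] at hms
    rw [hρ0, abs_div, abs_of_pos (mul_pos n1 n3), le_div_iff₀ (mul_pos n1 n3)] at hm0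
    rw [abs_div, abs_of_pos (mul_pos n1 n4), le_div_iff₀ (mul_pos n1 n4)]
    have habs : |cross r₁s (r₂ t)| = (1 - f) * |cross r₁s r₂s| + f * |cross r₁s r₂0| := by
      rw [hC]
      rcases lt_or_gt_of_ne hA0 with hA | hA
      · have hB : cross r₁s r₂0 < 0 := by nlinarith
        rw [abs_of_neg hA, abs_of_neg hB, abs_of_nonpos (by nlinarith)]
        ring
      · have hB : 0 < cross r₁s r₂0 := by nlinarith
        rw [abs_of_pos hA, abs_of_pos hB, abs_of_nonneg (by nlinarith)]
    have hn : ‖r₂ t‖ ≤ (1 - f) * ‖r₂s‖ + f * ‖r₂0‖ := by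
      rw [h2']
      refine (norm_add_le _ _).trans ?_
      rw [norm_smul, norm_smul, Real.norm_of_nonneg (sub_nonneg.2 he2'),
        Real.norm_of_nonneg he2.le]
    rw [habs]
    calc m * (‖r₁s‖ * ‖r₂ t‖) ≤ m * (‖r₁s‖ * ((1 - f) * ‖r₂s‖ + f * ‖r₂0‖)) := by gcongr
      _ = (1 - f) * (m * (‖r₁s‖ * ‖r₂s‖)) + f * (m * (‖r₁s‖ * ‖r₂0‖)) := by ring
      _ ≤ _ := add_le_add (mul_le_mul_of_nonneg_left hms (sub_nonneg.2 he2'))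
          (mul_le_mul_of_nonneg_left hm0 he2.le)
end
end

section
/- Under the hypotheses of the formation-angle lemma — i.e., k₁, k₂ > 0, r₁*, r₂* ∈ ℝ² nonzero, r₁(t) = r₁* + (r₁(0) − r₁*)e^{−k₁ t}, r₂(t) = r₂* + (r₂(0) − r₂*)e^{−k₂ t}, r₁(0) = μ r₁* for some μ > 0, and cross(r₁*, r₂(0)), cross(r₁*, r₂*) nonzero of the same sign — define ρ* = cross(r₁*, r₂*)/(‖r₁*‖‖r₂*‖), ρ₀ = cross(r₁(0), r₂(0))/(‖r₁(0)‖‖r₂(0)‖), and let R(t) be the 2×2 matrix whose rows are r₁(t)ᵀ and r₂(t)ᵀ. Then for all t ≥ 0, |det R(t)| ≥ min(|ρ₀|, |ρ*|) · ‖r₁(t)‖ · ‖r₂(t)‖. -/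
noncomputable section

open scoped RealInnerProductSpace

/-- The 2×2 matrix whose rows are `uᵀ` and `vᵀ`. -/
def rowMat (u v : E2) : Matrix (Fin 2) (Fin 2) ℝ :=
  Matrix.of ![WithLp.equiv 2 (Fin 2 → ℝ) u, WithLp.equiv 2 (Fin 2 → ℝ) v]

/-- determinant lower bound for the formation matrix.
Under the hypotheses of the formation-angle lemma, with `R(t)` the matrix with rows
`r₁(t)ᵀ, r₂(t)ᵀ`, one has `|det R(t)| ≥ min(|ρ₀|, |ρ*|) ‖r₁(t)‖ ‖r₂(t)‖` for all `t ≥ 0`. -/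
theorem stmt5 (k₁ k₂ : ℝ) (hk₁ : 0 < k₁) (hk₂ : 0 < k₂)
    (r₁s r₂s r₁0 r₂0 : E2) (hr₁s : r₁s ≠ 0) (hr₂s : r₂s ≠ 0)
    (μ : ℝ) (hμ : 0 < μ) (hdir : r₁0 = μ • r₁s)
    (hsign : 0 < cross r₁s r₂0 * cross r₁s r₂s)
    (r₁ r₂ : ℝ → E2)
    (hr₁ : ∀ t : ℝ, r₁ t = r₁s + Real.exp (-(k₁ * t)) • (r₁0 - r₁s))
    (hr₂ : ∀ t : ℝ, r₂ t = r₂s + Real.exp (-(k₂ * t)) • (r₂0 - r₂s))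
    (ρs ρ0 : ℝ)
    (hρs : ρs = cross r₁s r₂s / (‖r₁s‖ * ‖r₂s‖))
    (hρ0 : ρ0 = cross r₁0 r₂0 / (‖r₁0‖ * ‖r₂0‖))
    (R : ℝ → Matrix (Fin 2) (Fin 2) ℝ) (hR : ∀ t : ℝ, R t = rowMat (r₁ t) (r₂ t)) :
    ∀ t ≥ (0 : ℝ), min |ρ0| |ρs| * (‖r₁ t‖ * ‖r₂ t‖) ≤ |(R t).det| := by
  intro t ht
  have hN : 0 < ‖r₁s‖ := norm_pos_iff.mpr hr₁s
  have hN2 : 0 < ‖r₂s‖ := norm_pos_iff.mpr hr₂s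
  have hr20 : r₂0 ≠ 0 := by
    rintro rfl
    simp [cross] at hsign
  have hN20 : 0 < ‖r₂0‖ := norm_pos_iff.mpr hr20
  have hm0 : 0 ≤ min |ρ0| |ρs| := le_min (abs_nonneg _) (abs_nonneg _)
  have hA : min |ρ0| |ρs| * (‖r₁s‖ * ‖r₂s‖) ≤ |cross r₁s r₂s| := by
    have h : |cross r₁s r₂s| = |ρs| * (‖r₁s‖ * ‖r₂s‖) := by
      rw [hρs, abs_div, abs_of_pos (mul_pos hN hN2)]
      field_simp
    rw [h]
    exact mul_le_mul_of_nonneg_right (min_le_right _ _) (by positivity)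
  have hB : min |ρ0| |ρs| * (‖r₁s‖ * ‖r₂0‖) ≤ |cross r₁s r₂0| := by
    have hc : cross r₁0 r₂0 = μ * cross r₁s r₂0 := by
      rw [hdir]; simp [cross]; ring
    have hn : ‖r₁0‖ = μ * ‖r₁s‖ := by
      rw [hdir, norm_smul, Real.norm_of_nonneg hμ.le]
    have h : |cross r₁s r₂0| = |ρ0| * (‖r₁s‖ * ‖r₂0‖) := by
      rw [hρ0, hc, hn, abs_div, abs_mul, abs_of_pos hμ,
        abs_of_pos (mul_pos (mul_pos hμ hN) hN20)]
      field_simp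
    rw [h]
    exact mul_le_mul_of_nonneg_right (min_le_left _ _) (by positivity)
  generalize min |ρ0| |ρs| = m at *
  have he1 : Real.exp (-(k₁ * t)) ≤ 1 := Real.exp_le_one_iff.mpr (by nlinarith)
  have he2 : Real.exp (-(k₂ * t)) ≤ 1 := Real.exp_le_one_iff.mpr (by nlinarith)
  have hp1 := Real.exp_pos (-(k₁ * t))
  have hp2 := Real.exp_pos (-(k₂ * t))
  have e1 := hr₁ t
  have e2 := hr₂ t
  generalize Real.exp (-(k₁ * t)) = a at *
  generalize Real.exp (-(k₂ * t)) = s at *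
  have hc0 : 0 < 1 - a + a * μ := by nlinarith [mul_pos hp1 hμ]
  have e1' : r₁ t = (1 - a + a * μ) • r₁s := by
    rw [e1, hdir]; module
  have e2' : r₂ t = (1 - s) • r₂s + s • r₂0 := by
    rw [e2]; module
  have hdet : (R t).det
      = (1 - a + a * μ) * ((1 - s) * cross r₁s r₂s + s * cross r₁s r₂0) := by
    rw [hR, Matrix.det_fin_two, e1', e2']
    simp [rowMat, cross]
    ring
  have hnorm : ‖r₂ t‖ ≤ (1 - s) * ‖r₂s‖ + s * ‖r₂0‖ := by
    rw [e2']
    refine (norm_add_le _ _).trans (le_of_eq ?_)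
    rw [norm_smul, norm_smul, Real.norm_of_nonneg (by linarith), Real.norm_of_nonneg hp2.le]
  have habs : |(1 - s) * cross r₁s r₂s + s * cross r₁s r₂0|
      = (1 - s) * |cross r₁s r₂s| + s * |cross r₁s r₂0| := by
    have h1 : 0 ≤ 1 - s := by linarith
    rcases mul_pos_iff.mp hsign with ⟨h, h'⟩ | ⟨h, h'⟩
    · rw [abs_of_pos h, abs_of_pos h', abs_of_nonneg]
      positivity
    · rw [abs_of_neg h, abs_of_neg h', abs_of_nonpos]
      · ring
      · nlinarith
  have hn1 : ‖r₁ t‖ = (1 - a + a * μ) * ‖r₁s‖ := by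
    rw [e1', norm_smul, Real.norm_of_nonneg hc0.le]
  rw [hdet, abs_mul, abs_of_pos hc0, habs, hn1]
  calc m * ((1 - a + a * μ) * ‖r₁s‖ * ‖r₂ t‖)
      ≤ m * ((1 - a + a * μ) * ‖r₁s‖ * ((1 - s) * ‖r₂s‖ + s * ‖r₂0‖)) := by gcongr
    _ = (1 - a + a * μ) * ((1 - s) * (m * (‖r₁s‖ * ‖r₂s‖)) + s * (m * (‖r₁s‖ * ‖r₂0‖))) := by
        ring
    _ ≤ _ := by
        have h1 : 0 ≤ 1 - s := by linarith
        gcongr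
end
end

section
/- Under the hypotheses of the formation-angle lemma — k₁, k₂ > 0, r₁*, r₂* ∈ ℝ² nonzero, r₁(t) = r₁* + (r₁(0) − r₁*)e^{−k₁ t}, r₂(t) = r₂* + (r₂(0) − r₂*)e^{−k₂ t}, r₁(0) = μ r₁* for some μ > 0, and cross(r₁*, r₂(0)), cross(r₁*, r₂*) nonzero of the same sign — the 2×2 matrix R(t) whose rows are r₁(t)ᵀ and r₂(t)ᵀ is invertible for every t ≥ 0. -/
noncomputable section

open scoped RealInnerProductSpace

/-- invertibility of the formation matrix.
Under the hypotheses of the formation-angle lemma, the matrix `R(t)` with rows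
`r₁(t)ᵀ, r₂(t)ᵀ` is invertible for every `t ≥ 0`. -/
theorem stmt6 (k₁ k₂ : ℝ) (hk₁ : 0 < k₁) (hk₂ : 0 < k₂)
    (r₁s r₂s r₁0 r₂0 : E2) (hr₁s : r₁s ≠ 0) (hr₂s : r₂s ≠ 0)
    (μ : ℝ) (hμ : 0 < μ) (hdir : r₁0 = μ • r₁s)
    (hsign : 0 < cross r₁s r₂0 * cross r₁s r₂s)
    (r₁ r₂ : ℝ → E2)
    (hr₁ : ∀ t : ℝ, r₁ t = r₁s + Real.exp (-(k₁ * t)) • (r₁0 - r₁s))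
    (hr₂ : ∀ t : ℝ, r₂ t = r₂s + Real.exp (-(k₂ * t)) • (r₂0 - r₂s))
    (R : ℝ → Matrix (Fin 2) (Fin 2) ℝ) (hR : ∀ t : ℝ, R t = rowMat (r₁ t) (r₂ t)) :
    ∀ t ≥ (0 : ℝ), IsUnit (R t) := by
  intro t ht
  rw [Matrix.isUnit_iff_isUnit_det, isUnit_iff_ne_zero]
  have ha0 := Real.exp_pos (-(k₁ * t))
  have hb0 := Real.exp_pos (-(k₂ * t))
  have ha1 : Real.exp (-(k₁ * t)) ≤ 1 := Real.exp_le_one_iff.mpr (by nlinarith)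
  have hb1 : Real.exp (-(k₂ * t)) ≤ 1 := Real.exp_le_one_iff.mpr (by nlinarith)
  generalize hga : Real.exp (-(k₁ * t)) = a at *
  generalize hgb : Real.exp (-(k₂ * t)) = b at *
  have hdet : (R t).det = (1 + a * (μ - 1)) *
      ((1 - b) * cross r₁s r₂s + b * cross r₁s r₂0) := by
    rw [hR, Matrix.det_fin_two, hr₁, hr₂, hdir, hga, hgb]
    simp [rowMat, cross]
    ring
  rw [hdet]
  have h1 : 0 < 1 + a * (μ - 1) := by nlinarith [mul_pos ha0 hμ]
  refine mul_ne_zero h1.ne' ?_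
  rcases mul_pos_iff.mp hsign with ⟨h2, h3⟩ | ⟨h2, h3⟩
  · have := mul_pos hb0 h2
    have := mul_nonneg (sub_nonneg.mpr hb1) h3.le
    linarith
  · have := mul_neg_of_pos_of_neg hb0 h2
    have := mul_nonpos_of_nonneg_of_nonpos (sub_nonneg.mpr hb1) h3.le
    linarith
end
end

section
/- Let f : ℝ² → ℝ be three times continuously differentiable with a unique maximizer x* ∈ ℝ², satisfying: ‖∇²f(y)‖ ≤ M_H for all y; ∇²f(x*) negative definite; ‖∇²f(y₁) − ∇²f(y₂)‖ ≤ L_H ‖y₁ − y₂‖ for all y₁, y₂; and ‖∇²f(y₁) − ∇²f(y₂)‖ ≤ G_H for all y₁, y₂. Let k₀, k₁, k₂ > 0 and r₁*, r₂* ∈ ℝ² with the desired formation matrix R* (rows r₁*ᵀ, r₂*ᵀ) invertible. Let x₀, x₁, x₂ : [0,∞) → ℝ² be differentiable trajectories of the closed-loop system ẋ₀ = k₀ g(t), ẋᵢ = −kᵢ(rᵢ(t) − rᵢ*) + k₀ g(t) for i ∈ {1,2}, where rᵢ(t) = xᵢ(t) − x₀(t), R(t) is the 2×2 matrix with rows r₁(t)ᵀ,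 r₂(t)ᵀ, assumed invertible for all t ≥ 0, and g(t) = R(t)⁻¹ [ f(x₁(t)) − f(x₀(t)) ; f(x₂(t)) − f(x₀(t)) ]. Set α₁ = 2 G_H k₀, let A be the 6×6 block-diagonal matrix diag(−k₁ I₂, −k₂ I₂, k₀ ∇²f(x*)), B the 6×2 matrix [0₂; 0₂; I₂], and C₁ the 2×6 matrix [0₂ 0₂ I₂]. Suppose there exist a symmetric positive definite 6×6 matrix P and scalars λ, τ, γ₁, γ₂ > 0 such that the 12×12 block matrix [[PA + AᵀP + τα₁² C₁ᵀC₁ + λP, PB, PB, PB], [BᵀP, −τI₂, 0, 0], [BᵀP, 0, −γ₁I₂, 0], [BᵀP, 0, 0, −γ₂I₂]] is negative definite. Then rᵢ(t) → rᵢ* as t → ∞ for i ∈ {1,2} (in particular ‖xᵢ(t) − x₀(t)‖ → ‖rᵢ*‖), and limsup_{t→∞} ‖x₀(t) − x*‖² ≤ γ₁ k₀² M_H² ‖R*⁻¹‖² (‖r₁*‖² + ‖r₂*‖²)² / (4 λ σ_min(P)), where σ_min(P) is the smallest eigenvalue of P. -/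
noncomputable section

open scoped RealInnerProductSpace
open Matrix

/-- The operator (spectral) norm of a 2×2 matrix, induced by the Euclidean norm. -/
def l2OpNorm (M : Matrix (Fin 2) (Fin 2) ℝ) : ℝ :=
  ‖LinearMap.toContinuousLinearMap (Matrix.toEuclideanLin M)‖

/-- The vector of `ℝ²` with entries `a, b`. -/
def vec2 (a b : ℝ) : E2 := (WithLp.equiv 2 (Fin 2 → ℝ)).symm ![a, b]

/-- Index type for the 6-dimensional stacked error `χ = (δ₁, δ₂, z)`. -/
abbrev E6 : Type := Fin 2 ⊕ (Fin 2 ⊕ Fin 2)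

/-- Collapse an index of `E6` to the underlying index in `Fin 2` of its block. -/
def collapse : E6 → Fin 2 := Sum.elim id (Sum.elim id id)

/-- The 6×6 block-diagonal system matrix `A = diag(−k₁I₂, −k₂I₂, k₀∇²f(x*))`. -/
def Amat (f : E2 → ℝ) (xs : E2) (k₀ k₁ k₂ : ℝ) : Matrix E6 E6 ℝ :=
  Matrix.fromBlocks ((-k₁) • (1 : Matrix (Fin 2) (Fin 2) ℝ)) 0 0
    (Matrix.fromBlocks ((-k₂) • (1 : Matrix (Fin 2) (Fin 2) ℝ)) 0 0 (k₀ • hessM f xs))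

/-- The 6×2 input matrix `B = [0₂; 0₂; I₂]`. -/
def Bmat : Matrix E6 (Fin 2) ℝ :=
  Matrix.of fun i j =>
    Sum.elim (fun _ => (0 : ℝ))
      (Sum.elim (fun _ => (0 : ℝ)) (fun i' => if i' = j then 1 else 0)) i

/-- The 2×6 output matrix `C₁ = [0₂ 0₂ I₂]`. -/
def C1mat : Matrix (Fin 2) E6 ℝ :=
  Matrix.of fun i x =>
    Sum.elim (fun _ => (0 : ℝ))
      (Sum.elim (fun _ => (0 : ℝ)) (fun j => if i = j then 1 else 0)) x

/-- Top-left 6×6 block of the LMI: `PA + AᵀP + τα₁² C₁ᵀC₁ + λP`. -/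
def Qmat (P A : Matrix E6 E6 ℝ) (τ α₁ lam : ℝ) : Matrix E6 E6 ℝ :=
  P * A + Aᵀ * P + (τ * α₁ ^ 2) • (C1matᵀ * C1mat) + lam • P

/-- Top-right 6×6 block of the LMI: `[PB PB PB]`. -/
def Umat (P : Matrix E6 E6 ℝ) : Matrix E6 E6 ℝ :=
  Matrix.of fun i t => (P * Bmat) i (collapse t)

/-- Bottom-left 6×6 block of the LMI: `[BᵀP; BᵀP; BᵀP]`. -/
def Lmat (P : Matrix E6 E6 ℝ) : Matrix E6 E6 ℝ :=
  Matrix.of fun t i => (Bmatᵀ * P) (collapse t) i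

/-- Bottom-right 6×6 block of the LMI: `diag(−τI₂, −γ₁I₂, −γ₂I₂)`. -/
def Dmat (τ γ₁ γ₂ : ℝ) : Matrix E6 E6 ℝ :=
  Matrix.fromBlocks ((-τ) • (1 : Matrix (Fin 2) (Fin 2) ℝ)) 0 0
    (Matrix.fromBlocks ((-γ₁) • (1 : Matrix (Fin 2) (Fin 2) ℝ)) 0 0
      ((-γ₂) • (1 : Matrix (Fin 2) (Fin 2) ℝ)))

/-- The 12×12 LMI matrix
`[[PA + AᵀP + τα₁²C₁ᵀC₁ + λP, PB, PB, PB], [BᵀP, −τI₂, 0, 0],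
  [BᵀP, 0, −γ₁I₂, 0], [BᵀP, 0, 0, −γ₂I₂]]`. -/
def lmiMat (P A : Matrix E6 E6 ℝ) (lam τ γ₁ γ₂ α₁ : ℝ) : Matrix (E6 ⊕ E6) (E6 ⊕ E6) ℝ :=
  Matrix.fromBlocks (Qmat P A τ α₁ lam) (Umat P) (Lmat P) (Dmat τ γ₁ γ₂)

/-- The gradient of `f` as a vector. -/
def gradv (f : E2 → ℝ) (x : E2) : E2 :=
  WithLp.toLp 2 (fun j => fderiv ℝ f x (EuclideanSpace.single j 1))

/-- Matrix action as continuous linear map. -/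
def mcl (M : Matrix (Fin 2) (Fin 2) ℝ) : E2 →L[ℝ] E2 :=
  LinearMap.toContinuousLinearMap (Matrix.toEuclideanLin M)

lemma mcl_apply (M : Matrix (Fin 2) (Fin 2) ℝ) (v : E2) (i : Fin 2) :
    mcl M v i = M i 0 * v 0 + M i 1 * v 1 := by
  fin_cases i <;> simp [mcl, Matrix.toLpLin_apply]

lemma matVec_eq (M : Matrix (Fin 2) (Fin 2) ℝ) (v : E2) : matVec M v = mcl M v := by
  ext i
  rw [mcl_apply]
  fin_cases i <;> simp [matVec]

lemma vec_decomp (u : E2) : u = u 0 • EuclideanSpace.single 0 (1:ℝ)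
    + u 1 • EuclideanSpace.single 1 (1:ℝ) := by
  ext i; fin_cases i <;> simp

lemma fderiv_eq_gradv (f : E2 → ℝ) (x u : E2) :
    fderiv ℝ f x u = u 0 * gradv f x 0 + u 1 * gradv f x 1 := by
  conv_lhs => rw [vec_decomp u]
  rw [map_add, map_smul, map_smul]
  simp [gradv]

lemma inner_gradv (f : E2 → ℝ) (x u : E2) : fderiv ℝ f x u = inner ℝ (gradv f x) u := by
  rw [fderiv_eq_gradv]
  simp [PiLp.inner_apply, Fin.sum_univ_two]

lemma hess_snd (f : E2 → ℝ) (hf : ContDiff ℝ 3 f) (x : E2) (i j : Fin 2) :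
    hessM f x i j = fderiv ℝ (fderiv ℝ f) x (EuclideanSpace.single i 1)
      (EuclideanSpace.single j 1) := by
  have hd : DifferentiableAt ℝ (fderiv ℝ f) x :=
    ((hf.fderiv_right (m := 2) (by norm_num)).differentiable (by norm_num)) x
  have h := hd.hasFDerivAt.clm_apply (hasFDerivAt_const (EuclideanSpace.single j (1:ℝ)) x)
  simp only [hessM, Matrix.of_apply]
  rw [h.fderiv]
  simp

lemma gradv_hasFDerivAt (f : E2 → ℝ) (hf : ContDiff ℝ 3 f) (x : E2) :
    HasFDerivAt (gradv f) (mcl (hessM f x)) x := by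
  have hd : DifferentiableAt ℝ (fderiv ℝ f) x :=
    ((hf.fderiv_right (m := 2) (by norm_num)).differentiable (by norm_num)) x
  have hs : IsSymmSndFDerivAt ℝ f x := hf.contDiffAt.isSymmSndFDerivAt (by simp; norm_num)
  rw [← hasFDerivWithinAt_univ, hasFDerivWithinAt_euclidean]
  intro j
  have h := hd.hasFDerivAt.clm_apply (hasFDerivAt_const (EuclideanSpace.single j (1:ℝ)) x)
  rw [hasFDerivWithinAt_univ]
  refine h.congr_fderiv ?_
  ext u
  simp only [_root_.add_apply, ContinuousLinearMap.comp_apply,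
    ContinuousLinearMap.flip_apply, _root_.zero_apply, map_zero, zero_add,
    PiLp.proj_apply]
  rw [mcl_apply, hess_snd f hf, hess_snd f hf, hs.eq (EuclideanSpace.single j (1:ℝ)) (EuclideanSpace.single 0 (1:ℝ)), hs.eq (EuclideanSpace.single j (1:ℝ)) (EuclideanSpace.single 1 (1:ℝ))]
  conv_lhs => rw [vec_decomp u]
  simp
  ring

lemma gradv_lip (f : E2 → ℝ) (hf : ContDiff ℝ 3 f) (M : ℝ)
    (hM : ∀ y : E2, l2OpNorm (hessM f y) ≤ M) (x y : E2) :
    ‖gradv f y - gradv f x‖ ≤ M * ‖y - x‖ :=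
  Convex.norm_image_sub_le_of_norm_hasFDerivWithin_le (s := Set.univ)
    (fun z _ => (gradv_hasFDerivAt f hf z).hasFDerivWithinAt) (fun z _ => hM z) convex_univ
    trivial trivial

lemma mcl_sub (A B : Matrix (Fin 2) (Fin 2) ℝ) : mcl (A - B) = mcl A - mcl B := by
  simp [mcl]

lemma gradv_lin (f : E2 → ℝ) (hf : ContDiff ℝ 3 f) (G : ℝ)
    (hG : ∀ y z : E2, l2OpNorm (hessM f y - hessM f z) ≤ G) (xs y : E2)
    (hmax : ∀ y : E2, y ≠ xs → f y < f xs) :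
    ‖gradv f y - mcl (hessM f xs) (y - xs)‖ ≤ G * ‖y - xs‖ := by
  have h0 : gradv f xs = 0 := by
    have : IsLocalMax f xs := Filter.Eventually.of_forall fun y => by
      by_cases h : y = xs
      · rw [h]
      · exact (hmax y h).le
    ext i
    simp [gradv, this.fderiv_eq_zero]
  have := Convex.norm_image_sub_le_of_norm_hasFDerivWithin_le' (s := Set.univ)
    (f := gradv f) (φ := mcl (hessM f xs)) (C := G) (x := xs) (y := y)
    (fun z _ => (gradv_hasFDerivAt f hf z).hasFDerivWithinAt)
    (fun z _ => by rw [← mcl_sub]; exact hG z xs) convex_univ trivial trivial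
  simpa [h0] using this

lemma taylor2 (f : E2 → ℝ) (hf : ContDiff ℝ 3 f) (M : ℝ)
    (hM : ∀ y : E2, l2OpNorm (hessM f y) ≤ M) (x r : E2) :
    |f (x + r) - f x - inner ℝ (gradv f x) r| ≤ M / 2 * ‖r‖ ^ 2 := by
  have hd : ∀ s : ℝ, HasDerivAt (fun s : ℝ => f (x + s • r) - f x - s * inner ℝ (gradv f x) r)
      (inner ℝ (gradv f (x + s • r)) r - inner ℝ (gradv f x) r) s := by
    intro s
    have h1 : HasDerivAt (fun s : ℝ => x + s • r) r s := by
      simpa using ((hasDerivAt_id s).smul_const r).const_add x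
    have h2 := ((hf.differentiable (by norm_num)) (x + s • r)).hasFDerivAt.comp_hasDerivAt s h1
    rw [inner_gradv] at h2
    have h3 := (hasDerivAt_id s).mul_const (inner ℝ (gradv f x) r)
    have h4 := (h2.sub_const (f x)).fun_sub h3
    rw [one_mul] at h4
    exact h4
  have hB : ∀ s : ℝ, HasDerivAt (fun s : ℝ => M / 2 * s ^ 2 * ‖r‖ ^ 2) (M * s * ‖r‖ ^ 2) s := by
    intro s
    have h4 := (((hasDerivAt_pow 2 s)).const_mul (M/2)).mul_const (‖r‖ ^ 2)
    refine h4.congr_deriv ?_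
    push_cast; ring
  have key := image_norm_le_of_norm_deriv_right_le_deriv_boundary (a := (0:ℝ)) (b := 1)
    (fun s _ => (hd s).continuousAt.continuousWithinAt)
    (fun s _ => (hd s).hasDerivWithinAt) (B := fun s : ℝ => M / 2 * s ^ 2 * ‖r‖ ^ 2)
    (by simp) hB (by
      intro s hs
      rw [← inner_sub_left]
      refine (norm_inner_le_norm _ _).trans ?_
      have := gradv_lip f hf M hM x (x + s • r)
      rw [add_sub_cancel_left, norm_smul, Real.norm_of_nonneg hs.1] at this
      nlinarith [norm_nonneg r]) (x := 1) (by simp)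
  simpa using key

lemma eig_lower (P : Matrix E6 E6 ℝ) (hP : P.PosDef) (χ : E6 → ℝ) :
    (⨅ i, hP.1.eigenvalues i) * (χ ⬝ᵥ χ) ≤ χ ⬝ᵥ P *ᵥ χ := by
  set σ := ⨅ i, hP.1.eigenvalues i with hσ
  have hh : (P - σ • (1 : Matrix E6 E6 ℝ)).IsHermitian := by
    refine hP.1.sub ?_
    simp [Matrix.IsHermitian]
  have hps : (P - σ • (1 : Matrix E6 E6 ℝ)).PosSemidef := by
    rw [hh.posSemidef_iff_eigenvalues_nonneg]
    intro i
    have h1 := hh.eigenvalues_mem_spectrum_real i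
    have h2 : hh.eigenvalues i + σ ∈ spectrum ℝ P := by
      rw [spectrum.add_mem_iff, Algebra.algebraMap_eq_smul_one, neg_add_eq_sub]
      exact h1
    rw [hP.1.spectrum_real_eq_range_eigenvalues] at h2
    obtain ⟨j, hj⟩ := h2
    have := ciInf_le (Set.finite_range hP.1.eigenvalues).bddBelow j
    simp only [Pi.zero_apply]
    linarith
  have := hps.dotProduct_mulVec_nonneg χ
  simp [Matrix.sub_mulVec, Matrix.smul_mulVec, dotProduct_sub] at this
  exact this

lemma eig_pos (P : Matrix E6 E6 ℝ) (hP : P.PosDef) : 0 < ⨅ i, hP.1.eigenvalues i := by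
  obtain ⟨i, hi⟩ := exists_eq_ciInf_of_finite (f := hP.1.eigenvalues)
  rw [← hi]
  exact hP.eigenvalues_pos i

lemma comparison (u u' : ℝ → ℝ) (lam b T : ℝ) (hlam : 0 < lam)
    (hu : ∀ t ≥ T, HasDerivAt u (u' t) t) (hb : ∀ t ≥ T, u' t ≤ - lam * u t + b)
    (ε : ℝ) (hε : 0 < ε) : ∀ᶠ t in Filter.atTop, u t ≤ b / lam + ε := by
  have hd : ∀ t ≥ T, HasDerivAt (fun t => (u t - b / lam) * Real.exp (lam * t))
      (u' t * Real.exp (lam * t) + (u t - b / lam) * (Real.exp (lam * t) * lam)) t := by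
    intro t ht
    have h1 : HasDerivAt (fun t => Real.exp (lam * t)) (Real.exp (lam * t) * lam) t := by
      simpa using ((hasDerivAt_id t).const_mul lam).exp
    exact ((hu t ht).sub_const _).mul h1
  have hanti : AntitoneOn (fun t => (u t - b / lam) * Real.exp (lam * t)) (Set.Ici T) := by
    apply antitoneOn_of_deriv_nonpos (convex_Ici T)
    · exact fun t ht => (hd t ht).continuousAt.continuousWithinAt
    · intro t ht
      rw [interior_Ici] at ht
      exact (hd t (le_of_lt ht)).differentiableAt.differentiableWithinAt
    · intro t ht
      rw [interior_Ici] at ht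
      rw [(hd t (le_of_lt ht)).deriv]
      have e : u' t * Real.exp (lam * t) + (u t - b / lam) * (Real.exp (lam * t) * lam)
        = (u' t + lam * u t - b) * Real.exp (lam * t) := by field_simp; ring
      rw [e]
      exact mul_nonpos_of_nonpos_of_nonneg (by linarith [hb t (le_of_lt ht)]) (Real.exp_pos _).le
  set K := (u T - b / lam) * Real.exp (lam * T)
  have hexp : Filter.Tendsto (fun t => ε * Real.exp (lam * t)) Filter.atTop Filter.atTop :=
    (Real.tendsto_exp_atTop.comp (Filter.tendsto_id.const_mul_atTop hlam)).const_mul_atTop hε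
  filter_upwards [hexp.eventually_ge_atTop K, Filter.eventually_ge_atTop T] with t h1 h2
  have h3 : (u t - b / lam) * Real.exp (lam * t) ≤ K := hanti (Set.mem_Ici.2 le_rfl) h2 h2
  have := le_of_mul_le_mul_right (h3.trans h1) (Real.exp_pos _)
  linarith

lemma delta_tendsto (δ : ℝ → E2) (k : ℝ) (hk : 0 < k)
    (h : ∀ t ≥ (0:ℝ), HasDerivAt δ ((-k) • δ t) t) :
    Filter.Tendsto δ Filter.atTop (nhds 0) := by
  have hu : ∀ t ≥ (0:ℝ), HasDerivAt (fun t => ‖δ t‖ ^ 2) (2 * inner ℝ (δ t) ((-k) • δ t)) t :=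
    fun t ht => (h t ht).norm_sq
  have hc := comparison _ _ (2 * k) 0 0 (by linarith) hu (by
    intro t _
    rw [inner_smul_right, real_inner_self_eq_norm_sq]
    linarith)
  rw [Metric.tendsto_atTop']
  intro ε hε
  obtain ⟨N, hN⟩ := Filter.eventually_atTop.1 (hc (ε ^ 2 / 2) (by positivity))
  refine ⟨N, fun t ht => ?_⟩
  have := hN t ht.le
  rw [dist_zero_right]
  refine lt_of_pow_lt_pow_left₀ 2 hε.le ?_
  have : 0 < ε ^ 2 := by positivity
  simp at *
  linarith

lemma l2_tendsto_inv (Rt : ℝ → Matrix (Fin 2) (Fin 2) ℝ) (Rs : Matrix (Fin 2) (Fin 2) ℝ)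
    (hu : IsUnit Rs) (h : Filter.Tendsto Rt Filter.atTop (nhds Rs)) :
    Filter.Tendsto (fun t => l2OpNorm (Rt t)⁻¹) Filter.atTop (nhds (l2OpNorm Rs⁻¹)) := by
  have hl : Continuous l2OpNorm := by
    have : Continuous (((LinearMap.toContinuousLinearMap (𝕜 := ℝ) (E := E2) (F' := E2)).toLinearMap.comp
      (Matrix.toEuclideanLin (𝕜 := ℝ) (m := Fin 2) (n := Fin 2)).toLinearMap)) :=
      LinearMap.continuous_of_finiteDimensional _
    exact this.norm
  refine (hl.tendsto _).comp ?_
  have hdet : Rs.det ≠ 0 := ((Matrix.isUnit_iff_isUnit_det _).1 hu).ne_zero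
  simp only [Matrix.inv_def, Ring.inverse_eq_inv']
  exact (((continuous_id.matrix_det.tendsto Rs).comp h).inv₀ hdet).smul
    ((continuous_id.matrix_adjugate.tendsto Rs).comp h)

lemma Umat_mulVec (P : Matrix E6 E6 ℝ) (a b c : Fin 2 → ℝ) :
    Umat P *ᵥ (Sum.elim a (Sum.elim b c)) = P *ᵥ (Bmat *ᵥ (a + b + c)) := by
  ext i
  rw [Matrix.mulVec_mulVec]
  simp [Umat, Matrix.mulVec, dotProduct, collapse, Fin.sum_univ_two]
  ring

lemma Lmat_eq (P : Matrix E6 E6 ℝ) (hP : P.IsSymm) : Lmat P = (Umat P)ᵀ := by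
  ext t i
  simp only [Lmat, Umat, Matrix.of_apply, Matrix.transpose_apply]
  rw [← Matrix.transpose_apply (P * Bmat), Matrix.transpose_mul, hP.eq]

lemma Dmat_mulVec (τ γ₁ γ₂ : ℝ) (a b c : Fin 2 → ℝ) :
    Dmat τ γ₁ γ₂ *ᵥ (Sum.elim a (Sum.elim b c))
      = Sum.elim ((-τ) • a) (Sum.elim ((-γ₁) • b) ((-γ₂) • c)) := by
  simp only [Dmat, Matrix.fromBlocks_mulVec, Matrix.smul_mulVec, Matrix.one_mulVec,
    Matrix.zero_mulVec, Sum.elim_comp_inl, Sum.elim_comp_inr, add_zero, zero_add]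

lemma C1_mulVec (a b c : Fin 2 → ℝ) : C1mat *ᵥ (Sum.elim a (Sum.elim b c)) = c := by
  ext i
  simp [C1mat, Matrix.mulVec, dotProduct]

lemma B_mulVec (c : Fin 2 → ℝ) : Bmat *ᵥ c = Sum.elim (0 : Fin 2 → ℝ) (Sum.elim (0 : Fin 2 → ℝ) c) := by
  ext i
  rcases i with i | i | i <;> simp [Bmat, Matrix.mulVec, dotProduct]

lemma A_mulVec (f : E2 → ℝ) (xs : E2) (k₀ k₁ k₂ : ℝ) (a b c : Fin 2 → ℝ) :
    Amat f xs k₀ k₁ k₂ *ᵥ (Sum.elim a (Sum.elim b c))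
      = Sum.elim ((-k₁) • a) (Sum.elim ((-k₂) • b) (k₀ • (hessM f xs *ᵥ c))) := by
  simp only [Amat, Matrix.fromBlocks_mulVec, Matrix.smul_mulVec, Matrix.one_mulVec,
    Matrix.zero_mulVec, Sum.elim_comp_inl, Sum.elim_comp_inr, add_zero, zero_add]

lemma symm_dot (P : Matrix E6 E6 ℝ) (hP : P.IsSymm) (u v : E6 → ℝ) :
    u ⬝ᵥ P *ᵥ v = v ⬝ᵥ P *ᵥ u := by
  rw [Matrix.dotProduct_mulVec, dotProduct_comm, ← Matrix.mulVec_transpose, hP.eq]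

lemma lmi_ineq (P A : Matrix E6 E6 ℝ) (hP : P.IsSymm) (lam τ γ₁ γ₂ α₁ : ℝ)
    (hL : (-(lmiMat P A lam τ γ₁ γ₂ α₁)).PosDef) (a b c w1 w2 : Fin 2 → ℝ) (χ : E6 → ℝ)
    (hχ : χ = Sum.elim a (Sum.elim b c)) :
    2 * (χ ⬝ᵥ P *ᵥ (A *ᵥ χ + Bmat *ᵥ (w1 + w2))) + lam * (χ ⬝ᵥ P *ᵥ χ)
      + τ * α₁ ^ 2 * (c ⬝ᵥ c) - τ * (w1 ⬝ᵥ w1) - γ₁ * (w2 ⬝ᵥ w2) ≤ 0 := by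
  have h := hL.posSemidef.dotProduct_mulVec_nonneg
    (Sum.elim χ (Sum.elim w1 (Sum.elim w2 (0 : Fin 2 → ℝ))))
  have hU : Sum.elim w1 (Sum.elim w2 (0 : Fin 2 → ℝ)) ⬝ᵥ (Umat P)ᵀ *ᵥ χ
      = χ ⬝ᵥ P *ᵥ (Bmat *ᵥ (w1 + w2)) := by
    rw [Matrix.mulVec_transpose, dotProduct_comm, ← Matrix.dotProduct_mulVec, Umat_mulVec, add_zero]
  have hQ : χ ⬝ᵥ Qmat P A τ α₁ lam *ᵥ χ = 2 * (χ ⬝ᵥ P *ᵥ (A *ᵥ χ))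
      + τ * α₁ ^ 2 * (c ⬝ᵥ c) + lam * (χ ⬝ᵥ P *ᵥ χ) := by
    have h1 : χ ⬝ᵥ (Aᵀ * P) *ᵥ χ = χ ⬝ᵥ P *ᵥ (A *ᵥ χ) := by
      rw [← Matrix.mulVec_mulVec, Matrix.mulVec_transpose, dotProduct_comm,
        ← Matrix.dotProduct_mulVec, dotProduct_comm, symm_dot P hP, dotProduct_comm,
        dotProduct_comm, symm_dot P hP, symm_dot P hP]
    have h2 : χ ⬝ᵥ (C1matᵀ * C1mat) *ᵥ χ = c ⬝ᵥ c := by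
      rw [← Matrix.mulVec_mulVec, Matrix.mulVec_transpose, dotProduct_comm,
        ← Matrix.dotProduct_mulVec, hχ, C1_mulVec]
    simp only [Qmat, Matrix.add_mulVec, Matrix.smul_mulVec, dotProduct_add, dotProduct_smul, h1, h2,
      smul_eq_mul]
    rw [← Matrix.mulVec_mulVec]
    ring
  rw [star_trivial, lmiMat, Matrix.neg_mulVec, dotProduct_neg, Matrix.fromBlocks_mulVec,
    sumElim_dotProduct_sumElim, Sum.elim_comp_inl, Sum.elim_comp_inr, Lmat_eq P hP,
    dotProduct_add, dotProduct_add, hU, hQ, Umat_mulVec, Dmat_mulVec,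
    sumElim_dotProduct_sumElim, sumElim_dotProduct_sumElim, add_zero] at h
  simp only [dotProduct_smul, smul_eq_mul, dotProduct_zero, mul_zero] at h
  rw [Matrix.mulVec_add, dotProduct_add]
  linarith

lemma V_deriv (P : Matrix E6 E6 ℝ) (hP : P.IsSymm) (χ : ℝ → E6 → ℝ) (χ' : E6 → ℝ) (t : ℝ)
    (h : HasDerivAt χ χ' t) :
    HasDerivAt (fun t => χ t ⬝ᵥ P *ᵥ χ t) (2 * (χ t ⬝ᵥ P *ᵥ χ')) t := by
  have hc := hasDerivAt_pi.1 h
  have h1 : HasDerivAt (fun t => ∑ i, χ t i * ∑ j, P i j * χ t j)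
      (∑ i, (χ' i * (∑ j, P i j * χ t j) + χ t i * ∑ j, P i j * χ' j)) t := by
    apply HasDerivAt.fun_sum
    intro i _
    apply (hc i).mul
    apply HasDerivAt.fun_sum
    intro j _
    exact (hc j).const_mul _
  have e : (∑ i, (χ' i * (∑ j, P i j * χ t j) + χ t i * ∑ j, P i j * χ' j))
      = χ' ⬝ᵥ P *ᵥ χ t + χ t ⬝ᵥ P *ᵥ χ' := by
    rw [Finset.sum_add_distrib]; rfl
  rw [e, symm_dot P hP χ' (χ t), ← two_mul] at h1
  exact h1

lemma dot_norm (u : E2) : u.ofLp ⬝ᵥ u.ofLp = ‖u‖ ^ 2 := by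
  rw [EuclideanSpace.norm_sq_eq]; simp [dotProduct, sq]

lemma mcl_mulVec (M : Matrix (Fin 2) (Fin 2) ℝ) (v : E2) : (mcl M v).ofLp = M *ᵥ v.ofLp := by
  simp [mcl, Matrix.toLpLin_apply]

/-- decomposition of the gradient estimate -/
lemma g_decomp (f : E2 → ℝ) (hf : ContDiff ℝ 3 f) (M : ℝ)
    (hM : ∀ y : E2, l2OpNorm (hessM f y) ≤ M) (y₀ y₁ y₂ : E2)
    (hu : IsUnit (rowMat (y₁ - y₀) (y₂ - y₀))) :
    ‖matVec (rowMat (y₁ - y₀) (y₂ - y₀))⁻¹ (vec2 (f y₁ - f y₀) (f y₂ - f y₀)) - gradv f y₀‖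
      ≤ l2OpNorm (rowMat (y₁ - y₀) (y₂ - y₀))⁻¹
        * (M / 2 * (‖y₁ - y₀‖ ^ 2 + ‖y₂ - y₀‖ ^ 2)) := by
  set Rm := rowMat (y₁ - y₀) (y₂ - y₀) with hR
  have hM0 : 0 ≤ M := (norm_nonneg _).trans (hM 0)
  have h1 : gradv f y₀ = mcl Rm⁻¹ (mcl Rm (gradv f y₀)) := by
    apply (WithLp.ofLp_injective 2)
    rw [mcl_mulVec, mcl_mulVec, Matrix.mulVec_mulVec,
      Matrix.nonsing_inv_mul _ ((Matrix.isUnit_iff_isUnit_det _).1 hu), Matrix.one_mulVec]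
  rw [matVec_eq]
  rw [congrArg (fun v => mcl Rm⁻¹ (vec2 (f y₁ - f y₀) (f y₂ - f y₀)) - v) h1, ← map_sub]
  refine (ContinuousLinearMap.le_opNorm _ _).trans ?_
  refine mul_le_mul_of_nonneg_left ?_ (norm_nonneg _)
  have t1 := taylor2 f hf M hM y₀ (y₁ - y₀)
  have t2 := taylor2 f hf M hM y₀ (y₂ - y₀)
  rw [add_sub_cancel, ← inner_gradv, fderiv_eq_gradv] at t1 t2
  have e0 : (vec2 (f y₁ - f y₀) (f y₂ - f y₀) - mcl Rm (gradv f y₀)) 0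
    = f y₁ - f y₀ - ((y₁ - y₀) 0 * gradv f y₀ 0 + (y₁ - y₀) 1 * gradv f y₀ 1) := by
    rw [PiLp.sub_apply, mcl_apply]; simp [vec2, hR, rowMat]
  have e1 : (vec2 (f y₁ - f y₀) (f y₂ - f y₀) - mcl Rm (gradv f y₀)) 1
    = f y₂ - f y₀ - ((y₂ - y₀) 0 * gradv f y₀ 0 + (y₂ - y₀) 1 * gradv f y₀ 1) := by
    rw [PiLp.sub_apply, mcl_apply]; simp [vec2, hR, rowMat]
  rw [← e0] at t1
  rw [← e1] at t2
  generalize vec2 (f y₁ - f y₀) (f y₂ - f y₀) - mcl Rm (gradv f y₀) = w at *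
  refine le_of_sq_le_sq ?_ (by positivity)
  rw [EuclideanSpace.norm_sq_eq, Fin.sum_univ_two, Real.norm_eq_abs, Real.norm_eq_abs]
  have p1 : 0 ≤ M / 2 * ‖y₁ - y₀‖ ^ 2 := by positivity
  have p2 : 0 ≤ M / 2 * ‖y₂ - y₀‖ ^ 2 := by positivity
  nlinarith [abs_nonneg (w 0), abs_nonneg (w 1), mul_nonneg p1 p2,
    pow_le_pow_left₀ (abs_nonneg (w 0)) t1 2, pow_le_pow_left₀ (abs_nonneg (w 1)) t2 2]

open Filter in
/-- main theorem: simultaneous formation acquisition and extremum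
seeking.  Under the field assumptions, the closed-loop control law, and feasibility of
the LMI, the relative positions converge to the desired formation and
`limsup_{t→∞} ‖x₀(t) − x*‖² ≤ γ₁ k₀² M_H² ‖R*⁻¹‖² (‖r₁*‖² + ‖r₂*‖²)² / (4 λ σ_min(P))`. -/
theorem stmt15 (f : E2 → ℝ) (hf : ContDiff ℝ 3 f) (xs : E2)
    (hmax : ∀ y : E2, y ≠ xs → f y < f xs)
    (M_H : ℝ) (hMH : ∀ y : E2, l2OpNorm (hessM f y) ≤ M_H)
    (hnegdef : (-(hessM f xs)).PosDef)
    (L_H : ℝ) (hLH : ∀ y₁ y₂ : E2, l2OpNorm (hessM f y₁ - hessM f y₂) ≤ L_H * ‖y₁ - y₂‖)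
    (G_H : ℝ) (hGH : ∀ y₁ y₂ : E2, l2OpNorm (hessM f y₁ - hessM f y₂) ≤ G_H)
    (k₀ k₁ k₂ : ℝ) (hk₀ : 0 < k₀) (hk₁ : 0 < k₁) (hk₂ : 0 < k₂)
    (r₁s r₂s : E2) (Rs : Matrix (Fin 2) (Fin 2) ℝ) (hRs : Rs = rowMat r₁s r₂s)
    (hRsUnit : IsUnit Rs)
    (x₀ x₁ x₂ : ℝ → E2)
    (R : ℝ → Matrix (Fin 2) (Fin 2) ℝ)
    (hRdef : ∀ t : ℝ, R t = rowMat (x₁ t - x₀ t) (x₂ t - x₀ t))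
    (hRUnit : ∀ t ≥ (0 : ℝ), IsUnit (R t))
    (g : ℝ → E2)
    (hg : ∀ t : ℝ, g t = matVec (R t)⁻¹
      (vec2 (f (x₁ t) - f (x₀ t)) (f (x₂ t) - f (x₀ t))))
    (hx₀ : ∀ t ≥ (0 : ℝ), HasDerivAt x₀ (k₀ • g t) t)
    (hx₁ : ∀ t ≥ (0 : ℝ), HasDerivAt x₁ ((-k₁) • (x₁ t - x₀ t - r₁s) + k₀ • g t) t)
    (hx₂ : ∀ t ≥ (0 : ℝ), HasDerivAt x₂ ((-k₂) • (x₂ t - x₀ t - r₂s) + k₀ • g t) t)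
    (α₁ : ℝ) (hα₁ : α₁ = 2 * G_H * k₀)
    (P : Matrix E6 E6 ℝ) (hPsymm : P.IsSymm) (hPpos : P.PosDef)
    (lam τ γ₁ γ₂ : ℝ) (hlam : 0 < lam) (hτ : 0 < τ) (hγ₁ : 0 < γ₁) (hγ₂ : 0 < γ₂)
    (hLMI : (-(lmiMat P (Amat f xs k₀ k₁ k₂) lam τ γ₁ γ₂ α₁)).PosDef) :
    Tendsto (fun t => x₁ t - x₀ t) atTop (nhds r₁s) ∧
    Tendsto (fun t => x₂ t - x₀ t) atTop (nhds r₂s) ∧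
    Tendsto (fun t => ‖x₁ t - x₀ t‖) atTop (nhds ‖r₁s‖) ∧
    Tendsto (fun t => ‖x₂ t - x₀ t‖) atTop (nhds ‖r₂s‖) ∧
    limsup (fun t => ‖x₀ t - xs‖ ^ 2) atTop
      ≤ γ₁ * k₀ ^ 2 * M_H ^ 2 * l2OpNorm Rs⁻¹ ^ 2 * (‖r₁s‖ ^ 2 + ‖r₂s‖ ^ 2) ^ 2
        / (4 * lam * ⨅ i, hPpos.1.eigenvalues i) := by
  have hδ₁ : Tendsto (fun t => x₁ t - x₀ t - r₁s) atTop (nhds 0) := by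
    apply delta_tendsto _ k₁ hk₁
    intro t ht
    refine (((hx₁ t ht).fun_sub (hx₀ t ht)).sub_const r₁s).congr_deriv ?_
    abel
  have hδ₂ : Tendsto (fun t => x₂ t - x₀ t - r₂s) atTop (nhds 0) := by
    apply delta_tendsto _ k₂ hk₂
    intro t ht
    refine (((hx₂ t ht).fun_sub (hx₀ t ht)).sub_const r₂s).congr_deriv ?_
    abel
  have hr₁ : Tendsto (fun t => x₁ t - x₀ t) atTop (nhds r₁s) := by
    simpa using hδ₁.add_const r₁s
  have hr₂ : Tendsto (fun t => x₂ t - x₀ t) atTop (nhds r₂s) := by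
    simpa using hδ₂.add_const r₂s
  refine ⟨hr₁, hr₂, hr₁.norm, hr₂.norm, ?_⟩
  have hG0 : 0 ≤ G_H := (norm_nonneg _).trans (hGH 0 0)
  have hRt : Tendsto R atTop (nhds Rs) := by
    have hcont : Continuous (fun p : E2 × E2 => rowMat p.1 p.2) := by
      refine continuous_matrix fun i j => ?_
      fin_cases i
      · show Continuous fun p : E2 × E2 => p.1.ofLp j
        fun_prop
      · show Continuous fun p : E2 × E2 => p.2.ofLp j
        fun_prop
    have := (hcont.tendsto (r₁s, r₂s)).comp (hr₁.prodMk_nhds hr₂)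
    rw [hRs]
    refine this.congr fun t => ?_
    rw [hRdef]; rfl
  have hinv := l2_tendsto_inv R Rs hRsUnit hRt
  set β : ℝ → ℝ := fun t => k₀ * (l2OpNorm (R t)⁻¹
    * (M_H / 2 * (‖x₁ t - x₀ t‖ ^ 2 + ‖x₂ t - x₀ t‖ ^ 2))) with hβ
  set βs : ℝ := k₀ * (l2OpNorm Rs⁻¹ * (M_H / 2 * (‖r₁s‖ ^ 2 + ‖r₂s‖ ^ 2))) with hβs
  have hβt : Tendsto (fun t => γ₁ * β t ^ 2) atTop (nhds (γ₁ * βs ^ 2)) :=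
    (((hinv.mul (((hr₁.norm.pow 2).add (hr₂.norm.pow 2)).const_mul (M_H / 2))).const_mul
      k₀).pow 2).const_mul γ₁
  set σ := ⨅ i, hPpos.1.eigenvalues i with hσ
  have hσ0 : 0 < σ := eig_pos P hPpos
  have hrhs : γ₁ * k₀ ^ 2 * M_H ^ 2 * l2OpNorm Rs⁻¹ ^ 2 * (‖r₁s‖ ^ 2 + ‖r₂s‖ ^ 2) ^ 2
        / (4 * lam * σ) = γ₁ * βs ^ 2 / (lam * σ) := by
    rw [hβs]; field_simp; ring
  rw [hrhs]
  set χ : ℝ → E6 → ℝ := fun t => Sum.elim (x₁ t - x₀ t - r₁s).ofLp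
    (Sum.elim (x₂ t - x₀ t - r₂s).ofLp (x₀ t - xs).ofLp) with hχ
  set w1 : ℝ → E2 := fun t => k₀ • (gradv f (x₀ t) - mcl (hessM f xs) (x₀ t - xs)) with hw1
  set w2 : ℝ → E2 := fun t => k₀ • (g t - gradv f (x₀ t)) with hw2
  have hw1b : ∀ t, ‖w1 t‖ ^ 2 ≤ α₁ ^ 2 * ‖x₀ t - xs‖ ^ 2 := by
    intro t
    rw [← mul_pow]
    refine pow_le_pow_left₀ (norm_nonneg _) ?_ 2
    simp only [hw1, norm_smul, Real.norm_of_nonneg hk₀.le]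
    have h1 := mul_le_mul_of_nonneg_left (gradv_lin f hf G_H hGH xs (x₀ t) hmax) hk₀.le
    have h2 : 0 ≤ k₀ * (G_H * ‖x₀ t - xs‖) := by positivity
    rw [hα₁]
    linarith
  have hw2b : ∀ t ≥ (0:ℝ), ‖w2 t‖ ^ 2 ≤ β t ^ 2 := by
    intro t ht
    refine pow_le_pow_left₀ (norm_nonneg _) ?_ 2
    simp only [hw2, hβ, norm_smul, Real.norm_of_nonneg hk₀.le]
    refine mul_le_mul_of_nonneg_left ?_ hk₀.le
    have hu := hRUnit t ht
    rw [hg t]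
    rw [hRdef t] at hu ⊢
    exact g_decomp f hf M_H hMH _ _ _ hu
  have hχd : ∀ t ≥ (0:ℝ), HasDerivAt χ
      (Amat f xs k₀ k₁ k₂ *ᵥ χ t + Bmat *ᵥ ((w1 t).ofLp + (w2 t).ofLp)) t := by
    intro t ht
    have hA : Amat f xs k₀ k₁ k₂ *ᵥ χ t = _ := A_mulVec f xs k₀ k₁ k₂ _ _ _
    rw [hA, B_mulVec, ← mcl_mulVec]
    have d0 : HasDerivAt (fun t => x₀ t - xs) (k₀ • g t) t := (hx₀ t ht).sub_const xs
    have d1 : HasDerivAt (fun t => x₁ t - x₀ t - r₁s) ((-k₁) • (x₁ t - x₀ t - r₁s)) t := by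
      refine (((hx₁ t ht).fun_sub (hx₀ t ht)).sub_const r₁s).congr_deriv ?_
      abel
    have d2 : HasDerivAt (fun t => x₂ t - x₀ t - r₂s) ((-k₂) • (x₂ t - x₀ t - r₂s)) t := by
      refine (((hx₂ t ht).fun_sub (hx₀ t ht)).sub_const r₂s).congr_deriv ?_
      abel
    have coord : ∀ (y : ℝ → E2) (y' : E2), HasDerivAt y y' t → ∀ i : Fin 2,
        HasDerivAt (fun t => (y t).ofLp i) (y'.ofLp i) t := by
      intro y y' hy i
      exact (EuclideanSpace.proj (𝕜 := ℝ) i).hasFDerivAt.comp_hasDerivAt t hy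
    rw [hasDerivAt_pi]
    rintro (i | i | i)
    · refine (coord _ _ d1 i).congr_deriv ?_
      simp
    · refine (coord _ _ d2 i).congr_deriv ?_
      simp
    · refine (coord _ _ d0 i).congr_deriv ?_
      simp [hw1, hw2]
      ring
  have hV : ∀ t ≥ (0:ℝ), HasDerivAt (fun t => χ t ⬝ᵥ P *ᵥ χ t) _ t :=
    fun t ht => V_deriv P hPsymm χ _ t (hχd t ht)
  have hVb : ∀ t ≥ (0:ℝ),
      2 * (χ t ⬝ᵥ P *ᵥ (Amat f xs k₀ k₁ k₂ *ᵥ χ t + Bmat *ᵥ ((w1 t).ofLp + (w2 t).ofLp)))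
        ≤ - lam * (χ t ⬝ᵥ P *ᵥ χ t) + γ₁ * β t ^ 2 := by
    intro t ht
    have h := lmi_ineq P (Amat f xs k₀ k₁ k₂) hPsymm lam τ γ₁ γ₂ α₁ hLMI _ _ _
      (w1 t).ofLp (w2 t).ofLp (χ t) rfl
    rw [dot_norm, dot_norm, dot_norm] at h
    have h1 := mul_le_mul_of_nonneg_left (hw1b t) hτ.le
    have h2 := mul_le_mul_of_nonneg_left (hw2b t ht) hγ₁.le
    linarith
  refine le_of_forall_pos_le_add fun ε hε => ?_
  have hη : 0 < lam * σ * ε / 2 := by positivity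
  obtain ⟨T, hT⟩ := eventually_atTop.1
    (hβt.eventually (eventually_le_nhds (b := γ₁ * βs ^ 2 + lam * σ * ε / 2) (by linarith)))
  have hcmp := comparison (fun t => χ t ⬝ᵥ P *ᵥ χ t) _ lam (γ₁ * βs ^ 2 + lam * σ * ε / 2)
    (max T 0) hlam (fun t ht => hV t ((le_max_right _ _).trans ht))
    (fun t ht => (hVb t ((le_max_right _ _).trans ht)).trans
      (by linarith [hT t ((le_max_left _ _).trans ht)])) (σ * ε / 2) (by positivity)
  refine limsup_le_of_le (isCoboundedUnder_le_of_le atTop (x := 0) fun t => by positivity) ?_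
  filter_upwards [hcmp] with t ht
  have h1 := eig_lower P hPpos (χ t)
  have h2 : ‖x₀ t - xs‖ ^ 2 ≤ χ t ⬝ᵥ χ t := by
    simp only [hχ, sumElim_dotProduct_sumElim, dot_norm]
    nlinarith [sq_nonneg ‖x₁ t - x₀ t - r₁s‖, sq_nonneg ‖x₂ t - x₀ t - r₂s‖]
  have h3 : σ * ‖x₀ t - xs‖ ^ 2 ≤ σ * (γ₁ * βs ^ 2 / (lam * σ) + ε) := by
    refine (mul_le_mul_of_nonneg_left h2 hσ0.le).trans (h1.trans (ht.trans (le_of_eq ?_)))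
    field_simp
    ring
  exact le_of_mul_le_mul_left h3 hσ0
end
end

section
/- Let f : ℝ² → ℝ be twice continuously differentiable with ‖∇²f(y)‖ ≤ M_H and ‖∇²f(y₁) − ∇²f(y₂)‖ ≤ L_H ‖y₁ − y₂‖ for all y, y₁, y₂ ∈ ℝ². Let k₀, k₁, k₂ > 0, let r₁*, r₂* ∈ ℝ² be nonzero with the matrix R* (rows r₁*ᵀ, r₂*ᵀ) invertible, let rᵢ(t) = rᵢ* + (rᵢ(0) − rᵢ*) e^{−kᵢ t} with initial values satisfying r₁(0) = μ r₁* for some μ > 0 and cross(r₁*, r₂(0)), cross(r₁*, r₂*) nonzero of the same sign, let R(t) be the matrix with rows r₁(t)ᵀ, r₂(t)ᵀ, and let x₀ : [0,∞) → ℝ² be any function. Define φ₂(t) = (1/2) k₀ R(t)⁻¹ [ ∫₀¹ (1−ξ₁) ⟪r₁(t), ∇²f(x₀(t) + ξ₁ r₁(t)) r₁(t)⟫ dξ₁ ; ∫₀¹ (1−ξ₂) ⟪r₂(t), ∇²f(x₀(t) + ξ₂ r₂(t)) r₂(t)⟫ dξ₂ ] and φ₂*(t) = (1/2) k₀ R*⁻¹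 [ ∫₀¹ (1−ξ₁) ⟪r₁*, ∇²f(x₀(t) + ξ₁ r₁*) r₁*⟫ dξ₁ ; ∫₀¹ (1−ξ₂) ⟪r₂*, ∇²f(x₀(t) + ξ₂ r₂*) r₂*⟫ dξ₂ ]. Then there exist ε, β > 0 such that ‖φ₂(t) − φ₂*(t)‖ ≤ ε e^{−β t} for all t ≥ 0. -/
noncomputable section

open scoped RealInnerProductSpace

lemma matVec_sub_right (M : Matrix (Fin 2) (Fin 2) ℝ) (u v : E2) :
    matVec M (u - v) = matVec M u - matVec M v := by
  ext i; fin_cases i <;> simp [matVec, Matrix.mulVec_sub]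

lemma matVec_sub_left (M N : Matrix (Fin 2) (Fin 2) ℝ) (u : E2) :
    matVec (M - N) u = matVec M u - matVec N u := by
  ext i; fin_cases i <;> simp [matVec, Matrix.sub_mulVec]

lemma matVec_norm_le (M : Matrix (Fin 2) (Fin 2) ℝ) (v : E2) :
    ‖matVec M v‖ ≤ l2OpNorm M * ‖v‖ := by
  have h := (LinearMap.toContinuousLinearMap (Matrix.toEuclideanLin M)).le_opNorm v
  exact h

lemma inner_matVec_le (M : Matrix (Fin 2) (Fin 2) ℝ) (u v : E2) (B : ℝ) (hB : l2OpNorm M ≤ B) :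
    |⟪u, matVec M v⟫| ≤ ‖u‖ * (B * ‖v‖) := by
  refine (abs_real_inner_le_norm u _).trans ?_
  refine mul_le_mul_of_nonneg_left ?_ (norm_nonneg _)
  exact (matVec_norm_le M v).trans (mul_le_mul_of_nonneg_right hB (norm_nonneg _))

lemma hessM_cont (f : E2 → ℝ) (hf : ContDiff ℝ 2 f) : Continuous (hessM f) := by
  refine continuous_matrix fun i j => ?_
  have h1 : ContDiff ℝ 1 (fderiv ℝ f) := hf.fderiv_right (by norm_num)
  have h2 : ContDiff ℝ 1 (fun y => fderiv ℝ f y (EuclideanSpace.single j 1)) :=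
    h1.clm_apply contDiff_const
  have h3 := (h2.continuous_fderiv (by norm_num)).clm_apply
    (continuous_const (y := (EuclideanSpace.single i 1 : E2)))
  exact h3

lemma integrand_cont (f : E2 → ℝ) (hf : ContDiff ℝ 2 f) (x r : E2) :
    Continuous fun ξ : ℝ => (1 - ξ) * ⟪r, matVec (hessM f (x + ξ • r)) r⟫ := by
  have h : Continuous fun ξ : ℝ => hessM f (x + ξ • r) :=
    (hessM_cont f hf).comp (by fun_prop)
  have h2 : Continuous fun ξ : ℝ => matVec (hessM f (x + ξ • r)) r := by
    unfold matVec
    exact (PiLp.continuous_toLp 2 _).comp (h.matrix_mulVec continuous_const)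
  exact (by fun_prop : Continuous fun ξ : ℝ => (1 - ξ)).mul (continuous_const.inner h2)

/-- The remainder integral. -/
def gInt (f : E2 → ℝ) (x r : E2) : ℝ :=
  ∫ ξ in (0 : ℝ)..1, (1 - ξ) * ⟪r, matVec (hessM f (x + ξ • r)) r⟫

lemma gInt_bound (f : E2 → ℝ) (M_H : ℝ) (hMH : ∀ y : E2, l2OpNorm (hessM f y) ≤ M_H)
    (x r : E2) : |gInt f x r| ≤ ‖r‖ * (M_H * ‖r‖) := by
  have := intervalIntegral.norm_integral_le_of_norm_le_const (a := (0:ℝ)) (b := 1)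
    (C := ‖r‖ * (M_H * ‖r‖))
    (f := fun ξ : ℝ => (1 - ξ) * ⟪r, matVec (hessM f (x + ξ • r)) r⟫) ?_
  · simpa [gInt] using this
  · intro ξ hξ
    rw [Set.uIoc_of_le zero_le_one] at hξ
    rw [Real.norm_eq_abs, abs_mul]
    have h1 : |1 - ξ| ≤ 1 := by rw [abs_le]; constructor <;> linarith [hξ.1, hξ.2]
    have h2 := inner_matVec_le _ r r M_H (hMH (x + ξ • r))
    calc _ ≤ 1 * |⟪r, matVec (hessM f (x + ξ • r)) r⟫| :=
          mul_le_mul_of_nonneg_right h1 (abs_nonneg _)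
      _ ≤ _ := by rw [one_mul]; exact h2

lemma gInt_lip (f : E2 → ℝ) (hf : ContDiff ℝ 2 f)
    (M_H : ℝ) (hMH : ∀ y : E2, l2OpNorm (hessM f y) ≤ M_H)
    (L_H : ℝ) (hLH : ∀ y₁ y₂ : E2, l2OpNorm (hessM f y₁ - hessM f y₂) ≤ L_H * ‖y₁ - y₂‖)
    (x r s : E2) :
    |gInt f x r - gInt f x s| ≤ (M_H * ‖r‖ + M_H * ‖s‖ + |L_H| * ‖s‖ * ‖s‖) * ‖r - s‖ := by
  unfold gInt
  rw [← intervalIntegral.integral_sub ((integrand_cont f hf x r).intervalIntegrable _ _)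
    ((integrand_cont f hf x s).intervalIntegrable _ _)]
  have := intervalIntegral.norm_integral_le_of_norm_le_const (a := (0:ℝ)) (b := 1)
    (C := (M_H * ‖r‖ + M_H * ‖s‖ + |L_H| * ‖s‖ * ‖s‖) * ‖r - s‖)
    (f := fun ξ : ℝ => (1 - ξ) * ⟪r, matVec (hessM f (x + ξ • r)) r⟫
      - (1 - ξ) * ⟪s, matVec (hessM f (x + ξ • s)) s⟫) ?_
  · simpa using this
  · intro ξ hξ
    rw [Set.uIoc_of_le zero_le_one] at hξ
    rw [← mul_sub, Real.norm_eq_abs, abs_mul]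
    have h1 : |1 - ξ| ≤ 1 := by rw [abs_le]; constructor <;> linarith [hξ.1, hξ.2]
    set A := hessM f (x + ξ • r) with hA
    set B := hessM f (x + ξ • s) with hB
    have e : ⟪r, matVec A r⟫ - ⟪s, matVec B s⟫ =
        ⟪r - s, matVec A r⟫ + ⟪s, matVec A (r - s)⟫ + ⟪s, matVec (A - B) s⟫ := by
      rw [matVec_sub_right, matVec_sub_left, inner_sub_left, inner_sub_right, inner_sub_right]
      ring
    have b1 := inner_matVec_le A (r - s) r M_H (hMH _)
    have b2 := inner_matVec_le A s (r - s) M_H (hMH _)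
    have hAB : l2OpNorm (A - B) ≤ |L_H| * ‖r - s‖ := by
      refine (hLH _ _).trans ?_
      have e2 : x + ξ • r - (x + ξ • s) = ξ • (r - s) := by rw [smul_sub]; abel
      rw [e2, norm_smul, Real.norm_eq_abs, abs_of_pos hξ.1]
      refine mul_le_mul (le_abs_self _) ?_ (by have := hξ.1; positivity) (abs_nonneg _)
      have := norm_nonneg (r - s)
      nlinarith [hξ.2]
    have b3 := inner_matVec_le (A - B) s s _ hAB
    calc _ ≤ 1 * |⟪r, matVec A r⟫ - ⟪s, matVec B s⟫| :=
          mul_le_mul_of_nonneg_right h1 (abs_nonneg _)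
      _ ≤ |⟪r - s, matVec A r⟫| + |⟪s, matVec A (r - s)⟫| + |⟪s, matVec (A - B) s⟫| := by
          rw [one_mul, e]; exact abs_add_three _ _ _
      _ ≤ _ := by linarith

/-- `a` is exponentially close to the bounded function `b`. -/
def ExpClose (β : ℝ) (a b : ℝ → ℝ) : Prop :=
  (∃ C : ℝ, 0 ≤ C ∧ ∀ t ≥ (0:ℝ), |a t| ≤ C) ∧ (∃ C : ℝ, 0 ≤ C ∧ ∀ t ≥ (0:ℝ), |b t| ≤ C) ∧
  ∃ C : ℝ, 0 ≤ C ∧ ∀ t ≥ (0:ℝ), |a t - b t| ≤ C * Real.exp (-(β * t))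

lemma ExpClose.mul {β : ℝ} {a b c d : ℝ → ℝ} (h : ExpClose β a b) (k : ExpClose β c d) :
    ExpClose β (fun t => a t * c t) (fun t => b t * d t) := by
  obtain ⟨⟨A, hA0, hA⟩, ⟨B, hB0, hB⟩, ⟨E, hE0, hE⟩⟩ := h
  obtain ⟨⟨A', hA0', hA'⟩, ⟨B', hB0', hB'⟩, ⟨E', hE0', hE'⟩⟩ := k
  refine ⟨⟨A * A', by positivity, fun t ht => ?_⟩, ⟨B * B', by positivity, fun t ht => ?_⟩,
    ⟨E * A' + B * E', by positivity, fun t ht => ?_⟩⟩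
  · rw [abs_mul]; exact mul_le_mul (hA t ht) (hA' t ht) (abs_nonneg _) hA0
  · rw [abs_mul]; exact mul_le_mul (hB t ht) (hB' t ht) (abs_nonneg _) hB0
  · have e : a t * c t - b t * d t = (a t - b t) * c t + b t * (c t - d t) := by ring
    rw [e]
    refine (abs_add_le _ _).trans ?_
    rw [abs_mul, abs_mul]
    have h1 := mul_le_mul (hE t ht) (hA' t ht) (abs_nonneg _) (by positivity)
    have h2 := mul_le_mul (hB t ht) (hE' t ht) (abs_nonneg _) hB0
    linarith

lemma ExpClose.sub {β : ℝ} {a b c d : ℝ → ℝ} (h : ExpClose β a b) (k : ExpClose β c d) :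
    ExpClose β (fun t => a t - c t) (fun t => b t - d t) := by
  obtain ⟨⟨A, hA0, hA⟩, ⟨B, hB0, hB⟩, ⟨E, hE0, hE⟩⟩ := h
  obtain ⟨⟨A', hA0', hA'⟩, ⟨B', hB0', hB'⟩, ⟨E', hE0', hE'⟩⟩ := k
  refine ⟨⟨A + A', by positivity, fun t ht => ?_⟩, ⟨B + B', by positivity, fun t ht => ?_⟩,
    ⟨E + E', by positivity, fun t ht => ?_⟩⟩
  · exact (abs_sub _ _).trans (add_le_add (hA t ht) (hA' t ht))
  · exact (abs_sub _ _).trans (add_le_add (hB t ht) (hB' t ht))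
  · have e : a t - c t - (b t - d t) = (a t - b t) - (c t - d t) := by ring
    rw [e, add_mul]
    exact (abs_sub _ _).trans (add_le_add (hE t ht) (hE' t ht))

lemma ExpClose.inv {β : ℝ} {a b : ℝ → ℝ} (h : ExpClose β a b) (δ : ℝ) (hδ : 0 < δ)
    (ha : ∀ t ≥ (0:ℝ), δ ≤ |a t|) (hb : ∀ t ≥ (0:ℝ), δ ≤ |b t|) :
    ExpClose β (fun t => (a t)⁻¹) (fun t => (b t)⁻¹) := by
  obtain ⟨-, -, ⟨E, hE0, hE⟩⟩ := h
  have i1 : ∀ x : ℝ, δ ≤ |x| → |x⁻¹| ≤ δ⁻¹ := fun x hx => by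
    rw [abs_inv]; exact inv_anti₀ hδ hx
  refine ⟨⟨δ⁻¹, by positivity, fun t ht => i1 _ (ha t ht)⟩,
    ⟨δ⁻¹, by positivity, fun t ht => i1 _ (hb t ht)⟩,
    ⟨δ⁻¹ * E * δ⁻¹, by positivity, fun t ht => ?_⟩⟩
  have ha' : a t ≠ 0 := abs_pos.1 (hδ.trans_le (ha t ht))
  have hb' : b t ≠ 0 := abs_pos.1 (hδ.trans_le (hb t ht))
  have e : (a t)⁻¹ - (b t)⁻¹ = (a t)⁻¹ * (-(a t - b t)) * (b t)⁻¹ := by field_simp; ring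
  rw [e, abs_mul, abs_mul, abs_neg]
  have h1 := mul_le_mul (i1 _ (ha t ht)) (hE t ht) (abs_nonneg _) (by positivity)
  have h2 := mul_le_mul h1 (i1 _ (hb t ht)) (abs_nonneg _) (by positivity)
  linarith

lemma ExpClose.const (β c : ℝ) : ExpClose β (fun _ => c) (fun _ => c) :=
  ⟨⟨|c|, abs_nonneg _, fun _ _ => le_rfl⟩, ⟨|c|, abs_nonneg _, fun _ _ => le_rfl⟩,
    ⟨0, le_rfl, fun _ _ => by simp⟩⟩

lemma r_close {β k : ℝ} (hk : 0 < k) (hβ : β ≤ k) (rs r0 : E2) (r : ℝ → E2)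
    (hr : ∀ t : ℝ, r t = rs + Real.exp (-(k * t)) • (r0 - rs)) (t : ℝ) (ht : 0 ≤ t) :
    ‖r t‖ ≤ ‖rs‖ + ‖r0 - rs‖ ∧ ‖r t - rs‖ ≤ ‖r0 - rs‖ * Real.exp (-(β * t)) := by
  have e1 : Real.exp (-(k * t)) ≤ 1 := Real.exp_le_one_iff.2 (by nlinarith)
  have e2 : Real.exp (-(k * t)) ≤ Real.exp (-(β * t)) := Real.exp_le_exp.2 (by nlinarith)
  have e0 := Real.exp_pos (-(k * t))
  have hn := norm_nonneg (r0 - rs)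
  have e3 : ‖Real.exp (-(k * t)) • (r0 - rs)‖ = Real.exp (-(k * t)) * ‖r0 - rs‖ := by
    rw [norm_smul, Real.norm_eq_abs, abs_of_pos e0]
  constructor
  · rw [hr]
    refine (norm_add_le _ _).trans ?_
    rw [e3]; nlinarith
  · rw [hr, add_sub_cancel_left, e3]; nlinarith

lemma coord_close {β k : ℝ} (hk : 0 < k) (hβ : β ≤ k) (rs r0 : E2) (r : ℝ → E2)
    (hr : ∀ t : ℝ, r t = rs + Real.exp (-(k * t)) • (r0 - rs)) (i : Fin 2) :
    ExpClose β (fun t => r t i) (fun _ => rs i) := by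
  refine ⟨⟨‖rs‖ + ‖r0 - rs‖, by positivity, fun t ht => ?_⟩, ⟨|rs i|, abs_nonneg _, fun _ _ => le_rfl⟩,
    ⟨‖r0 - rs‖, by positivity, fun t ht => ?_⟩⟩
  · exact (PiLp.norm_apply_le (r t) i).trans (r_close hk hβ rs r0 r hr t ht).1
  · exact (PiLp.norm_apply_le (r t - rs) i).trans (r_close hk hβ rs r0 r hr t ht).2

lemma gInt_close (f : E2 → ℝ) (hf : ContDiff ℝ 2 f)
    (M_H : ℝ) (hMH : ∀ y : E2, l2OpNorm (hessM f y) ≤ M_H)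
    (L_H : ℝ) (hLH : ∀ y₁ y₂ : E2, l2OpNorm (hessM f y₁ - hessM f y₂) ≤ L_H * ‖y₁ - y₂‖)
    {β k : ℝ} (hk : 0 < k) (hβ : β ≤ k) (rs r0 : E2) (r : ℝ → E2)
    (hr : ∀ t : ℝ, r t = rs + Real.exp (-(k * t)) • (r0 - rs)) (x₀ : ℝ → E2) :
    ExpClose β (fun t => gInt f (x₀ t) (r t)) (fun t => gInt f (x₀ t) rs) := by
  have hM : 0 ≤ M_H := (norm_nonneg _).trans (hMH 0)
  set K := ‖rs‖ + ‖r0 - rs‖ with hK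
  have hK0 : 0 ≤ K := by positivity
  refine ⟨⟨K * (M_H * K), by positivity, fun t ht => ?_⟩,
    ⟨‖rs‖ * (M_H * ‖rs‖), by positivity, fun t ht => gInt_bound f M_H hMH _ _⟩,
    ⟨(M_H * K + M_H * ‖rs‖ + |L_H| * ‖rs‖ * ‖rs‖) * ‖r0 - rs‖, by positivity, fun t ht => ?_⟩⟩
  · have h1 := (r_close hk hβ rs r0 r hr t ht).1
    refine (gInt_bound f M_H hMH _ _).trans ?_
    gcongr
  · obtain ⟨h1, h2⟩ := r_close hk hβ rs r0 r hr t ht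
    refine (gInt_lip f hf M_H hMH L_H hLH _ _ _).trans ?_
    rw [mul_assoc _ ‖r0 - rs‖]
    gcongr

lemma det_rowMat (u v : E2) : (rowMat u v).det = u 0 * v 1 - u 1 * v 0 := by
  simp [rowMat, Matrix.det_fin_two]

lemma matVec_inv_zero (u v : E2) (a b : ℝ) :
    matVec (rowMat u v)⁻¹ (vec2 a b) 0 = (u 0 * v 1 - u 1 * v 0)⁻¹ * (v 1 * a - u 1 * b) := by
  rw [Matrix.inv_def, det_rowMat, Ring.inverse_eq_inv']
  simp [matVec, vec2, Matrix.adjugate_fin_two, rowMat,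
    Matrix.mulVec, dotProduct, Fin.sum_univ_two]
  ring

lemma matVec_inv_one (u v : E2) (a b : ℝ) :
    matVec (rowMat u v)⁻¹ (vec2 a b) 1 = (u 0 * v 1 - u 1 * v 0)⁻¹ * (u 0 * b - v 0 * a) := by
  rw [Matrix.inv_def, det_rowMat, Ring.inverse_eq_inv']
  simp [matVec, vec2, Matrix.adjugate_fin_two, rowMat,
    Matrix.mulVec, dotProduct, Fin.sum_univ_two]
  ring

lemma conv_ge (p q e : ℝ) (h0 : 0 ≤ e) (h1 : e ≤ 1) : min p q ≤ p + e * (q - p) := by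
  have := min_le_left p q
  have := min_le_right p q
  nlinarith

/-- exponential decay of the uncertainty input `φ₃ = φ₂ − φ₂*`.
Under the stated Hessian bounds, formation initial conditions and exponential formation
convergence, the difference between the uncertainty input `φ₂(t)` (computed along the
actual formation `R(t)`) and `φ₂*(t)` (computed at the desired formation `R*`) decays
exponentially: there are `ε, β > 0` with `‖φ₂(t) − φ₂*(t)‖ ≤ ε e^{−βt}` for all `t ≥ 0`. -/
theorem stmt16 (f : E2 → ℝ) (hf : ContDiff ℝ 2 f)
    (M_H : ℝ) (hMH : ∀ y : E2, l2OpNorm (hessM f y) ≤ M_H)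
    (L_H : ℝ) (hLH : ∀ y₁ y₂ : E2, l2OpNorm (hessM f y₁ - hessM f y₂) ≤ L_H * ‖y₁ - y₂‖)
    (k₀ k₁ k₂ : ℝ) (hk₀ : 0 < k₀) (hk₁ : 0 < k₁) (hk₂ : 0 < k₂)
    (r₁s r₂s : E2) (hr₁s : r₁s ≠ 0) (hr₂s : r₂s ≠ 0)
    (Rs : Matrix (Fin 2) (Fin 2) ℝ) (hRs : Rs = rowMat r₁s r₂s) (hRsUnit : IsUnit Rs)
    (r₁0 r₂0 : E2) (μ : ℝ) (hμ : 0 < μ) (hdir : r₁0 = μ • r₁s)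
    (hsign : 0 < cross r₁s r₂0 * cross r₁s r₂s)
    (r₁ r₂ : ℝ → E2)
    (hr₁ : ∀ t : ℝ, r₁ t = r₁s + Real.exp (-(k₁ * t)) • (r₁0 - r₁s))
    (hr₂ : ∀ t : ℝ, r₂ t = r₂s + Real.exp (-(k₂ * t)) • (r₂0 - r₂s))
    (R : ℝ → Matrix (Fin 2) (Fin 2) ℝ) (hR : ∀ t : ℝ, R t = rowMat (r₁ t) (r₂ t))
    (x₀ : ℝ → E2)
    (φ₂ φ₂s : ℝ → E2)
    (hφ₂ : ∀ t : ℝ, φ₂ t = ((1 / 2) * k₀) • matVec (R t)⁻¹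
      (vec2 (∫ ξ in (0 : ℝ)..1, (1 - ξ) * ⟪r₁ t, matVec (hessM f (x₀ t + ξ • r₁ t)) (r₁ t)⟫)
            (∫ ξ in (0 : ℝ)..1, (1 - ξ) * ⟪r₂ t, matVec (hessM f (x₀ t + ξ • r₂ t)) (r₂ t)⟫)))
    (hφ₂s : ∀ t : ℝ, φ₂s t = ((1 / 2) * k₀) • matVec Rs⁻¹
      (vec2 (∫ ξ in (0 : ℝ)..1, (1 - ξ) * ⟪r₁s, matVec (hessM f (x₀ t + ξ • r₁s)) r₁s⟫)
            (∫ ξ in (0 : ℝ)..1, (1 - ξ) * ⟪r₂s, matVec (hessM f (x₀ t + ξ • r₂s)) r₂s⟫))) :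
    ∃ ε > (0 : ℝ), ∃ β > (0 : ℝ), ∀ t ≥ (0 : ℝ),
      ‖φ₂ t - φ₂s t‖ ≤ ε * Real.exp (-(β * t)) := by
  set β := min k₁ k₂ with hβ
  have hβ1 : β ≤ k₁ := min_le_left _ _
  have hβ2 : β ≤ k₂ := min_le_right _ _
  have hβ0 : 0 < β := lt_min hk₁ hk₂
  have c1 := coord_close hk₁ hβ1 r₁s r₁0 r₁ hr₁
  have c2 := coord_close hk₂ hβ2 r₂s r₂0 r₂ hr₂
  have g1 := gInt_close f hf M_H hMH L_H hLH hk₁ hβ1 r₁s r₁0 r₁ hr₁ x₀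
  have g2 := gInt_close f hf M_H hMH L_H hLH hk₂ hβ2 r₂s r₂0 r₂ hr₂ x₀
  have hd := ((c1 0).mul (c2 1)).sub ((c1 1).mul (c2 0))
  set cs := cross r₁s r₂s with hcs
  set c0 := cross r₁s r₂0 with hc0
  have hcs0 : cs ≠ 0 := fun h => by rw [h, mul_zero] at hsign; exact lt_irrefl _ hsign
  have hcsp : 0 < |cs| := abs_pos.2 hcs0
  have hm1 : 0 < min 1 μ := lt_min one_pos hμ
  have hm2 : 0 < min (cs * cs) (c0 * cs) := lt_min (mul_self_pos.2 hcs0) hsign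
  have hlow : ∀ t ≥ (0:ℝ), min 1 μ * min (cs * cs) (c0 * cs) / |cs| ≤
      |r₁ t 0 * r₂ t 1 - r₁ t 1 * r₂ t 0| := by
    intro t ht
    have hdet : (r₁ t 0 * r₂ t 1 - r₁ t 1 * r₂ t 0) * cs =
        (1 + Real.exp (-(k₁ * t)) * (μ - 1)) *
          (cs * cs + Real.exp (-(k₂ * t)) * (c0 * cs - cs * cs)) := by
      rw [hr₁, hr₂, hdir, hcs, hc0]
      simp only [cross, PiLp.add_apply, PiLp.smul_apply, PiLp.sub_apply, smul_eq_mul]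
      ring
    have e1 := conv_ge 1 μ _ (Real.exp_pos (-(k₁ * t))).le
      (Real.exp_le_one_iff.2 (by nlinarith))
    have e2 := conv_ge (cs * cs) (c0 * cs) _ (Real.exp_pos (-(k₂ * t))).le
      (Real.exp_le_one_iff.2 (by nlinarith))
    rw [div_le_iff₀ hcsp, ← abs_mul, hdet]
    exact (mul_le_mul e1 e2 hm2.le (hm1.le.trans e1)).trans (le_abs_self _)
  have hlows : min 1 μ * min (cs * cs) (c0 * cs) / |cs| ≤ |r₁s 0 * r₂s 1 - r₁s 1 * r₂s 0| := by
    rw [div_le_iff₀ hcsp]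
    change _ ≤ |cs| * |cs|
    rw [abs_mul_abs_self]
    calc _ ≤ 1 * (cs * cs) :=
          mul_le_mul (min_le_left _ _) (min_le_left _ _) hm2.le zero_le_one
      _ = _ := one_mul _
  have hinv := hd.inv _ (by positivity) hlow (fun t _ => hlows)
  obtain ⟨-, -, ⟨A, hA0, hA⟩⟩ := (ExpClose.const β ((1 / 2) * k₀)).mul
    (hinv.mul (((c2 1).mul g1).sub ((c1 1).mul g2)))
  obtain ⟨-, -, ⟨B, hB0, hB⟩⟩ := (ExpClose.const β ((1 / 2) * k₀)).mul
    (hinv.mul (((c1 0).mul g2).sub ((c2 0).mul g1)))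
  refine ⟨A + B + 1, by positivity, β, hβ0, fun t ht => ?_⟩
  have hA' : |(φ₂ t - φ₂s t) 0| ≤ A * Real.exp (-(β * t)) := by
    refine le_of_eq_of_le ?_ (hA t ht)
    rw [hφ₂, hφ₂s, hR, hRs, PiLp.sub_apply, PiLp.smul_apply, PiLp.smul_apply, matVec_inv_zero,
      matVec_inv_zero]
    rfl
  have hB' : |(φ₂ t - φ₂s t) 1| ≤ B * Real.exp (-(β * t)) := by
    refine le_of_eq_of_le ?_ (hB t ht)
    rw [hφ₂, hφ₂s, hR, hRs, PiLp.sub_apply, PiLp.smul_apply, PiLp.smul_apply, matVec_inv_one,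
      matVec_inv_one]
    rfl
  have hn : ‖φ₂ t - φ₂s t‖ ≤ |(φ₂ t - φ₂s t) 0| + |(φ₂ t - φ₂s t) 1| := by
    rw [EuclideanSpace.norm_eq, Fin.sum_univ_two]
    refine Real.sqrt_le_iff.2 ⟨by positivity, ?_⟩
    rw [Real.norm_eq_abs, Real.norm_eq_abs]
    nlinarith [mul_nonneg (abs_nonneg ((φ₂ t - φ₂s t) 0)) (abs_nonneg ((φ₂ t - φ₂s t) 1))]
  have := Real.exp_pos (-(β * t))
  linarith
end
end
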